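/- arXiv:2409.08218 — 2 statements merged into one kernel-verified Lean document; each statement's English description precedes it below -/
import Mathlib

section
/- There exists a function G : ℝ² → ℝ which is infinitely differentiable (of class C^∞), has compact support, is not identically zero, satisfies G(x) ≥ 0 for all x ∈ ℝ², and satisfies G(x) + ΔG(x) ≥ 0 for all x ∈ ℝ², where ΔG denotes the Laplacian ΔG = ∂²G/∂x₁² + ∂²G/∂x₂². -/
/-!
The function is a product `G (x, y) = f x * f y` of one-variable bumps, for which
`G + ΔG = (f'' + f / 2)(x) f(y) + f(x) (f'' + f / 2)(y)`; it therefore suffices to have `f ≥ 0` and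
`f'' + f / 2 ≥ 0`. A wide enough bump does this: it is convex near the boundary of its support, and
stretching makes `f''` small relative to `f` elsewhere. Concretely, `f x = g (1 - x² / 100)` with
`g v = exp (-1 / v)` for `v > 0` and `g v = 0` for `v ≤ 0`. Writing `w = (1 - x² / 100)⁻¹`, one has
`f'' + f / 2 = (w² (w² - 3 w + 3 / 2) / 25 + 1 / 2) f` on the support, and the factor is positive.
-/

/-- The profile `x ↦ exp (-1 / (1 - x² / 100))` on `(-10, 10)`, extended by zero. -/
noncomputable def wideBump (x : ℝ) : ℝ := expNegInvGlue (1 - x ^ 2 / 100)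

lemma hasDerivAt_expNegInvGlue (v : ℝ) :
    HasDerivAt expNegInvGlue (v⁻¹ ^ 2 * expNegInvGlue v) v := by
  simpa using expNegInvGlue.hasDerivAt_polynomial_eval_inv_mul 1 v

lemma hasDerivAt_inv_sq_mul_expNegInvGlue (v : ℝ) :
    HasDerivAt (fun v => v⁻¹ ^ 2 * expNegInvGlue v)
      ((v⁻¹ ^ 4 - 2 * v⁻¹ ^ 3) * expNegInvGlue v) v := by
  have h := expNegInvGlue.hasDerivAt_polynomial_eval_inv_mul (Polynomial.X ^ 2) v
  simp only [Polynomial.eval_pow, Polynomial.eval_X, Polynomial.eval_mul, Polynomial.eval_sub,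
    Polynomial.derivative_X_pow, Polynomial.eval_C] at h
  refine h.congr_deriv ?_
  push_cast
  ring

lemma contDiff_wideBump {n : ℕ∞} : ContDiff ℝ n wideBump :=
  expNegInvGlue.contDiff.comp (by fun_prop)

lemma wideBump_nonneg (x : ℝ) : 0 ≤ wideBump x := expNegInvGlue.nonneg _

lemma wideBump_eq_zero {x : ℝ} (hx : x ∉ Set.Icc (-10 : ℝ) 10) : wideBump x = 0 := by
  refine expNegInvGlue.zero_of_nonpos ?_
  by_contra! h
  exact hx (abs_le.mp (abs_le_of_sq_le_sq (by linarith) (by norm_num)))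

lemma hasDerivAt_one_sub_sq (x : ℝ) :
    HasDerivAt (fun x : ℝ => 1 - x ^ 2 / 100) (-(x / 50)) x := by
  have h := ((hasDerivAt_pow 2 x).div_const 100).const_sub 1
  refine h.congr_deriv ?_
  push_cast
  ring

lemma iteratedDeriv_two_wideBump (x : ℝ) :
    iteratedDeriv 2 wideBump x =
      (((1 - x ^ 2 / 100)⁻¹ ^ 4 - 2 * (1 - x ^ 2 / 100)⁻¹ ^ 3) * (x / 50) ^ 2
        - (1 - x ^ 2 / 100)⁻¹ ^ 2 / 50) * wideBump x := by
  have h1 : deriv wideBump = fun x => (1 - x ^ 2 / 100)⁻¹ ^ 2 *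
      expNegInvGlue (1 - x ^ 2 / 100) * (-(x / 50)) := by
    funext y
    exact ((hasDerivAt_expNegInvGlue _).comp y (hasDerivAt_one_sub_sq y)).deriv
  have h2 := ((hasDerivAt_inv_sq_mul_expNegInvGlue _).comp x (hasDerivAt_one_sub_sq x)).mul
    ((hasDerivAt_id x).div_const 50).neg
  rw [iteratedDeriv_succ, iteratedDeriv_one, h1]
  refine (h2.congr_deriv ?_).deriv
  simp only [Function.comp, wideBump, id, Pi.neg_apply]
  ring

lemma wideBump_add_nonneg (x : ℝ) : 0 ≤ iteratedDeriv 2 wideBump x + wideBump x / 2 := by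
  rcases le_or_gt (1 - x ^ 2 / 100) 0 with hv | hv
  · simp [iteratedDeriv_two_wideBump, wideBump, expNegInvGlue.zero_of_nonpos hv]
  · rw [iteratedDeriv_two_wideBump]
    set v := 1 - x ^ 2 / 100 with hvd
    have hw : v * v⁻¹ = 1 := mul_inv_cancel₀ hv.ne'
    have hx : (x / 50) ^ 2 = (1 - v) / 25 := by rw [hvd]; ring
    rw [hx]
    generalize v⁻¹ = w at hw
    -- The relation `v w = 1` turns the factor into a polynomial in `w` alone.
    have key : (w ^ 4 - 2 * w ^ 3) * ((1 - v) / 25) - w ^ 2 / 50 + 1 / 2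
        = w ^ 2 * (w ^ 2 - 3 * w + 3 / 2) / 25 + 1 / 2 := by
      linear_combination (-(w ^ 3 - 2 * w ^ 2) / 25) * hw
    have pos : 0 ≤ w ^ 2 * (w ^ 2 - 3 * w + 3 / 2) / 25 + 1 / 2 := by
      nlinarith [sq_nonneg (w ^ 2 - 3 / 2 * w - 1), sq_nonneg (w - 2), sq_nonneg w]
    have := mul_nonneg (key ▸ pos) (wideBump_nonneg x)
    linarith

/-- There exists a smooth, compactly supported, nonnegative, not identically zero
function `G : ℝ² → ℝ` such that `G + ΔG ≥ 0`, where
`ΔG p = ∂²G/∂x₁² p + ∂²G/∂x₂² p`. -/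
theorem exists_smooth_compactly_supported_nonneg_add_laplacian_nonneg :
    ∃ G : ℝ × ℝ → ℝ,
      ContDiff ℝ (⊤ : ℕ∞) G ∧
      HasCompactSupport G ∧
      G ≠ 0 ∧
      (∀ p, 0 ≤ G p) ∧
      (∀ p : ℝ × ℝ,
        0 ≤ G p +
          (iteratedDeriv 2 (fun s => G (s, p.2)) p.1 +
            iteratedDeriv 2 (fun t => G (p.1, t)) p.2)) := by
  refine ⟨fun p => wideBump p.1 * wideBump p.2, ?_, ?_, ?_, ?_, ?_⟩
  · exact (contDiff_wideBump.comp contDiff_fst).mul (contDiff_wideBump.comp contDiff_snd)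
  · refine HasCompactSupport.intro
      ((isCompact_Icc (a := (-10 : ℝ)) (b := 10)).prod (isCompact_Icc (a := (-10 : ℝ)) (b := 10)))
      fun p hp => ?_
    rw [Set.mem_prod, not_and_or] at hp
    rcases hp with hp | hp <;> simp [wideBump_eq_zero hp]
  · intro h
    have h0 : 0 < wideBump 0 := expNegInvGlue.pos_of_pos (by norm_num)
    exact (mul_pos h0 h0).ne' (congrFun h (0, 0))
  · exact fun p => mul_nonneg (wideBump_nonneg _) (wideBump_nonneg _)
  · rintro ⟨x, y⟩
    have e1 : iteratedDeriv 2 (fun s => wideBump s * wideBump y) x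
        = iteratedDeriv 2 wideBump x * wideBump y := by
      simp [iteratedDeriv_succ, iteratedDeriv_zero]
    have e2 : iteratedDeriv 2 (fun t => wideBump x * wideBump t) y
        = wideBump x * iteratedDeriv 2 wideBump y := by
      simp [iteratedDeriv_succ, iteratedDeriv_zero]
    dsimp only
    rw [e1, e2]
    have h1 := mul_nonneg (wideBump_add_nonneg x) (wideBump_nonneg y)
    have h2 := mul_nonneg (wideBump_nonneg x) (wideBump_add_nonneg y)
    linarith
end

section
/- Let b > 0, identify ℝ² with ℂ via z = x₁ + i x₂, and let a u := (−i∂₁ − A₁)u + i(−i∂₂ − A₂)u with A₁ = −b x₂/2, A₂ = b x₁/2. Then for every continuously differentiable function u : ℂ → ℂ (differentiable in the real sense), one has a u = 0 everywhere on ℂ if and only if the function z ↦ e^{b|z|²/4} u(z) is holomorphic (complex-differentiable at every point) on ℂ. -/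
/-!
Write `w z = e^{b|z|²/4}`. The product rule and `∂ⱼ w = (b xⱼ / 2) w` give
`∂₁(w u) + i ∂₂(w u) = w (∂₁ u + i ∂₂ u + (b/2) z u) = i w (a u)`
(`cauchyRiemann_weight_mul`). Since `w` never vanishes, `a u = 0` is the Cauchy–Riemann equation for
`w u`, which for a real-differentiable function is equivalent to complex differentiability.
-/

open Complex

/-- Partial derivative `∂₁` of `u : ℂ → ℂ`, identifying `ℂ` with `ℝ²`
via `z = x₁ + i x₂`. -/
noncomputable def pd1 (u : ℂ → ℂ) (z : ℂ) : ℂ :=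
  deriv (fun s : ℝ => u ((s : ℂ) + (z.im : ℂ) * Complex.I)) z.re

/-- Partial derivative `∂₂` of `u : ℂ → ℂ`. -/
noncomputable def pd2 (u : ℂ → ℂ) (z : ℂ) : ℂ :=
  deriv (fun t : ℝ => u ((z.re : ℂ) + (t : ℂ) * Complex.I)) z.im

/-- The annihilation operator `a u = (−i∂₁ − A₁)u + i(−i∂₂ − A₂)u`, where
`A₁ = −b x₂/2`, `A₂ = b x₁/2`, on `ℂ ≅ ℝ²`. -/
noncomputable def annih (b : ℝ) (u : ℂ → ℂ) (z : ℂ) : ℂ :=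
  ((-Complex.I) * pd1 u z - ((-b * z.im / 2 : ℝ) : ℂ) * u z) +
    Complex.I * ((-Complex.I) * pd2 u z - ((b * z.re / 2 : ℝ) : ℂ) * u z)

lemma pd1_eq_fderiv {f : ℂ → ℂ} {z : ℂ} (hf : DifferentiableAt ℝ f z) :
    pd1 f z = fderiv ℝ f z 1 := by
  have hline : HasDerivAt (fun s : ℝ => (s : ℂ) + (z.im : ℂ) * I) 1 z.re :=
    (Complex.ofRealCLM.hasDerivAt (x := z.re)).add_const _
  have hf' : HasFDerivAt f (fderiv ℝ f z) ((z.re : ℂ) + (z.im : ℂ) * I) := by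
    rw [re_add_im]; exact hf.hasFDerivAt
  exact (hf'.comp_hasDerivAt z.re hline).deriv

lemma pd2_eq_fderiv {f : ℂ → ℂ} {z : ℂ} (hf : DifferentiableAt ℝ f z) :
    pd2 f z = fderiv ℝ f z I := by
  have hline : HasDerivAt (fun t : ℝ => (z.re : ℂ) + (t : ℂ) * I) I z.im := by
    simpa using ((Complex.ofRealCLM.hasDerivAt (x := z.im)).mul_const I).const_add (z.re : ℂ)
  have hf' : HasFDerivAt f (fderiv ℝ f z) ((z.re : ℂ) + (z.im : ℂ) * I) := by
    rw [re_add_im]; exact hf.hasFDerivAt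
  exact (hf'.comp_hasDerivAt z.im hline).deriv

/-- The Gaussian weight `e^{b|z|²/4}`. -/
noncomputable def weight (b : ℝ) (z : ℂ) : ℂ :=
  Complex.exp (((b * Complex.normSq z) / 4 : ℝ) : ℂ)

lemma hasFDerivAt_weight (b : ℝ) (z : ℂ) :
    HasFDerivAt (weight b)
      (weight b z • ofRealCLM.comp ((b / 2) • (z.re • reCLM + z.im • imCLM))) z := by
  have hre : HasFDerivAt (fun w : ℂ => w.re) reCLM z := reCLM.hasFDerivAt
  have him : HasFDerivAt (fun w : ℂ => w.im) imCLM z := imCLM.hasFDerivAt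
  have hq : HasFDerivAt (fun w : ℂ => b * normSq w / 4)
      ((b / 2) • (z.re • reCLM + z.im • imCLM)) z := by
    have h := ((hre.mul hre).add (him.mul him)).const_mul (b / 4)
    refine (h.congr_fderiv ?_).congr_of_eventuallyEq (.of_forall fun w => ?_)
    · ext v
      simp
      ring
    · simp [normSq_apply]
      ring
  exact (ofRealCLM.hasFDerivAt.comp z hq).cexp

/-- The Cauchy–Riemann defect of `e^{b|z|²/4} u` is `i e^{b|z|²/4}` times `a u`. -/
lemma cauchyRiemann_weight_mul (b : ℝ) {u : ℂ → ℂ} {z : ℂ} (hu : DifferentiableAt ℝ u z) :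
    fderiv ℝ (weight b * u) z 1 + I * fderiv ℝ (weight b * u) z I =
      I * weight b z * annih b u z := by
  rw [((hasFDerivAt_weight b z).mul hu.hasFDerivAt).fderiv, annih, pd1_eq_fderiv hu,
    pd2_eq_fderiv hu]
  simp
  linear_combination (weight b z * fderiv ℝ u z 1 + I * weight b z * fderiv ℝ u z I
    + weight b z * (b * z.re / 2) * u z) * I_sq

/-- For a `C¹` function `u : ℂ → ℂ`, one has `a u = 0` everywhere on `ℂ`
if and only if `z ↦ e^{b|z|²/4} u(z)` is holomorphic on `ℂ`. -/
theorem annih_eq_zero_iff_holomorphic (b : ℝ) (hb : 0 < b)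
    (u : ℂ → ℂ) (hu : ContDiff ℝ 1 u) :
    (∀ z : ℂ, annih b u z = 0) ↔
      Differentiable ℂ (fun z : ℂ => Complex.exp (((b * Complex.normSq z) / 4 : ℝ) : ℂ) * u z) := by
  have hd : Differentiable ℝ u := hu.differentiable one_ne_zero
  refine forall_congr' fun z => ?_
  change _ ↔ DifferentiableAt ℂ (weight b * u) z
  rw [differentiableAt_complex_iff_differentiableAt_real,
    and_iff_right ((hasFDerivAt_weight b z).differentiableAt.mul (hd z)), smul_eq_mul]
  have hCR := cauchyRiemann_weight_mul b (hd z)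
  have hw : I * weight b z ≠ 0 := mul_ne_zero I_ne_zero (Complex.exp_ne_zero _)
  constructor
  · intro h
    rw [h, mul_zero] at hCR
    linear_combination (-I) * hCR + fderiv ℝ (weight b * u) z I * I_sq
  · intro h
    refine (mul_eq_zero.mp (hCR.symm.trans ?_)).resolve_left hw
    linear_combination I * h + fderiv ℝ (weight b * u) z 1 * I_sq
end
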